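/- Hoffman–Wielandt type bound: under the stated setup and assumptions, let Σ = diag(Σ_k, Σ_⊥) and let Σ' = diag(Σ̂, 0) be of conformal size, where Σ̂ contains the singular values of Â = QQ*A. Then for every p ∈ [1,∞] one has ‖Σ − Σ'‖_p ≤ ‖Σ_⊥‖_p + γ_k^{2q}·‖Σ_⊥Ω_2Ω_1†‖_p in the Schatten-p norm. -/

import Mathlib

open scoped ENNReal
open Matrix

/-- The `j`-th largest singular value (0-indexed) of a complex matrix,
obtained as the decreasingly sorted square roots of the eigenvalues of `Mᴴ * M`. -/
noncomputable def sval {m n : ℕ} (M : Matrix (Fin m) (Fin n) ℂ) (j : ℕ) : ℝ :=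
  (List.insertionSort (· ≥ ·)
    ((List.ofFn (Matrix.isHermitian_conjTranspose_mul_self M).eigenvalues).map Real.sqrt)).getD j 0

/-- The Schatten-`p` norm (`p = ∞` gives the spectral norm). -/
noncomputable def schatten {m n : ℕ} (p : ℝ≥0∞) (M : Matrix (Fin m) (Fin n) ℂ) : ℝ :=
  if p = ⊤ then sval M 0
  else (∑ j ∈ Finset.range n, sval M j ^ p.toReal) ^ (1 / p.toReal)

/-- Moore–Penrose pseudoinverse of a full-row-rank matrix. -/
noncomputable def rpinv {a b : ℕ} (M : Matrix (Fin a) (Fin b) ℂ) : Matrix (Fin b) (Fin a) ℂ :=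
  Mᴴ * (M * Mᴴ)⁻¹

/-- Rectangular diagonal matrix with entries `σ (off), σ (off+1), …` on the diagonal. -/
noncomputable def diagRect (σ : ℕ → ℝ) (off a b : ℕ) : Matrix (Fin a) (Fin b) ℂ :=
  Matrix.of fun i j => if (i : ℕ) = (j : ℕ) then (σ (off + (i : ℕ)) : ℂ) else 0

/-- The first `b` columns of a matrix with `b + c` columns. -/
def colsL {a b c : ℕ} (M : Matrix (Fin a) (Fin (b + c)) ℂ) : Matrix (Fin a) (Fin b) ℂ :=
  M.submatrix id (Fin.castAdd c)

/-- The last `c` columns of a matrix with `b + c` columns. -/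
def colsR {a b c : ℕ} (M : Matrix (Fin a) (Fin (b + c)) ℂ) : Matrix (Fin a) (Fin c) ℂ :=
  M.submatrix id (Fin.natAdd b)

/-- The real part of the standard Hermitian inner product on `ℂⁿ`. -/
def realInner {n : ℕ} (x y : Fin n → ℂ) : ℝ := (star x ⬝ᵥ y).re

section RealInner

variable {m n : ℕ}

lemma realInner_self (x : Fin n → ℂ) : realInner x x = ∑ i, Complex.normSq (x i) := by
  simp [realInner, dotProduct, Complex.normSq_apply]

lemma realInner_self_nonneg (x : Fin n → ℂ) : 0 ≤ realInner x x := by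
  rw [realInner_self]
  exact Finset.sum_nonneg fun i _ => Complex.normSq_nonneg _

lemma realInner_self_pos {x : Fin n → ℂ} (hx : x ≠ 0) : 0 < realInner x x := by
  obtain ⟨i, hi⟩ := Function.ne_iff.mp hx
  rw [realInner_self]
  exact Finset.sum_pos' (fun i _ => Complex.normSq_nonneg _)
    ⟨i, Finset.mem_univ i, Complex.normSq_pos.mpr hi⟩

lemma realInner_add_right (x y z : Fin n → ℂ) :
    realInner x (y + z) = realInner x y + realInner x z := by
  simp [realInner]

lemma realInner_mulVec_right (M : Matrix (Fin m) (Fin n) ℂ) (x : Fin m → ℂ) (y : Fin n → ℂ) :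
    realInner x (M *ᵥ y) = realInner (Mᴴ *ᵥ x) y := by
  simp [realInner, star_mulVec, dotProduct_mulVec]

lemma realInner_mulVec_self (M : Matrix (Fin m) (Fin n) ℂ) (x : Fin n → ℂ) :
    realInner (M *ᵥ x) (M *ᵥ x) = realInner x ((Mᴴ * M) *ᵥ x) := by
  rw [← mulVec_mulVec, realInner_mulVec_right Mᴴ, conjTranspose_conjTranspose]

lemma realInner_comm (x y : Fin n → ℂ) : realInner x y = realInner y x := by
  simp only [realInner, dotProduct, Complex.re_sum]
  refine Finset.sum_congr rfl fun i _ => ?_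
  simp [mul_comm]

lemma two_mul_realInner_le (x y : Fin n → ℂ) :
    2 * realInner x y ≤ realInner x x + realInner y y := by
  simp only [realInner, dotProduct, Complex.re_sum, Finset.mul_sum, ← Finset.sum_add_distrib]
  refine Finset.sum_le_sum fun i _ => ?_
  simp only [Pi.star_apply, RCLike.star_def, Complex.mul_re, Complex.conj_re, Complex.conj_im]
  nlinarith [sq_nonneg ((x i).re - (y i).re), sq_nonneg ((x i).im - (y i).im)]

lemma realInner_mulVec_isometry {M : Matrix (Fin m) (Fin n) ℂ} (hM : Mᴴ * M = 1)
    (x : Fin n → ℂ) : realInner (M *ᵥ x) (M *ᵥ x) = realInner x x := by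
  rw [realInner_mulVec_self, hM, one_mulVec]

lemma realInner_conjTranspose_mulVec_le {M : Matrix (Fin m) (Fin n) ℂ} (hM : Mᴴ * M = 1)
    (y : Fin m → ℂ) : realInner (Mᴴ *ᵥ y) (Mᴴ *ᵥ y) ≤ realInner y y := by
  have h₁ := two_mul_realInner_le (M *ᵥ (Mᴴ *ᵥ y)) y
  rw [realInner_mulVec_isometry hM, realInner_comm, realInner_mulVec_right] at h₁
  linarith

lemma realInner_diagonal (l : Fin n → ℝ) (x : Fin n → ℂ) :
    realInner x (diagonal (fun i => (l i : ℂ)) *ᵥ x) = ∑ i, l i * Complex.normSq (x i) := by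
  simp only [realInner, dotProduct, mulVec_diagonal, Complex.re_sum]
  refine Finset.sum_congr rfl fun i _ => ?_
  simp [Complex.normSq_apply]
  ring

/-- A vector supported on the first `j + 1` coordinates can be chosen nonzero and subject to `j`
linear constraints. -/
lemma exists_ne_zero_support_le (j : ℕ) (hj : j < n) (M : Matrix (Fin m) (Fin n) ℂ) :
    ∃ x : Fin n → ℂ, x ≠ 0 ∧ (∀ i : Fin n, j < i → x i = 0) ∧
      ∀ i : Fin m, (i : ℕ) < j → (M *ᵥ x) i = 0 := by
  let f : (Fin n → ℂ) →ₗ[ℂ] (Fin (n - (j + 1)) → ℂ) × (Fin j → ℂ) :=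
    { toFun := fun x => (fun i => x ⟨j + 1 + i, by omega⟩,
        fun i => if h : (i : ℕ) < m then (M *ᵥ x) ⟨i, h⟩ else 0)
      map_add' := by
        intro x y
        ext i
        · simp
        · by_cases h : (i : ℕ) < m <;> simp [h, mulVec_add]
      map_smul' := by
        intro c x
        ext i
        · simp
        · by_cases h : (i : ℕ) < m <;> simp [h, mulVec_smul] }
  have hker : LinearMap.ker f ≠ ⊥ := LinearMap.ker_ne_bot_of_finrank_lt (by simp; omega)
  obtain ⟨x, hx, hx0⟩ := Submodule.exists_mem_ne_zero_of_ne_bot hker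
  rw [LinearMap.mem_ker, Prod.ext_iff] at hx
  refine ⟨x, hx0, fun i hi => ?_, fun i hi => ?_⟩
  · have := congrFun hx.1 ⟨i - (j + 1), by omega⟩
    simp only [f, LinearMap.coe_mk, AddHom.coe_mk] at this
    rw [show (⟨j + 1 + (i - (j + 1)), by omega⟩ : Fin n) = i from Fin.ext (by simp; omega)] at this
    exact this
  · have := congrFun hx.2 ⟨i, hi⟩
    simpa [f] using this

end RealInner

/-- `W` diagonalizes `K` unitarily, with the real eigenvalues `l` in decreasing order. -/
structure IsEigenDecomposition {n : ℕ} (K W : Matrix (Fin n) (Fin n) ℂ) (l : Fin n → ℝ) :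
    Prop where
  antitone : Antitone l
  conjTranspose_mul : Wᴴ * W = 1
  mul_conjTranspose : W * Wᴴ = 1
  eq : K = W * diagonal (fun i => (l i : ℂ)) * Wᴴ

namespace IsEigenDecomposition

variable {n : ℕ} {K W K' W' : Matrix (Fin n) (Fin n) ℂ} {l l' : Fin n → ℝ}

lemma realInner_eq (h : IsEigenDecomposition K W l) (x : Fin n → ℂ) :
    realInner x (K *ᵥ x) = ∑ i, l i * Complex.normSq ((Wᴴ *ᵥ x) i) := by
  rw [← realInner_diagonal, h.eq, ← mulVec_mulVec, ← mulVec_mulVec, realInner_mulVec_right]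

lemma realInner_self_eq (h : IsEigenDecomposition K W l) (x : Fin n → ℂ) :
    realInner x x = ∑ i, Complex.normSq ((Wᴴ *ᵥ x) i) := by
  rw [← realInner_self, realInner_mulVec_isometry]
  simpa using h.mul_conjTranspose

lemma le_realInner (h : IsEigenDecomposition K W l) (j : Fin n) {y : Fin n → ℂ}
    (hy : ∀ i : Fin n, (j : ℕ) < i → y i = 0) :
    l j * realInner (W *ᵥ y) (W *ᵥ y) ≤ realInner (W *ᵥ y) (K *ᵥ (W *ᵥ y)) := by
  rw [h.realInner_eq, h.realInner_self_eq, mulVec_mulVec, h.conjTranspose_mul, one_mulVec,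
    Finset.mul_sum]
  refine Finset.sum_le_sum fun i _ => ?_
  rcases lt_or_ge (j : ℕ) i with hi | hi
  · simp [hy i hi]
  · exact mul_le_mul_of_nonneg_right (h.antitone hi) (Complex.normSq_nonneg _)

lemma realInner_le (h : IsEigenDecomposition K W l) (j : Fin n) {x : Fin n → ℂ}
    (hx : ∀ i : Fin n, (i : ℕ) < j → (Wᴴ *ᵥ x) i = 0) :
    realInner x (K *ᵥ x) ≤ l j * realInner x x := by
  rw [h.realInner_eq, h.realInner_self_eq, Finset.mul_sum]
  refine Finset.sum_le_sum fun i _ => ?_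
  rcases lt_or_ge (i : ℕ) j with hi | hi
  · simp [hx i hi]
  · exact mul_le_mul_of_nonneg_right (h.antitone hi) (Complex.normSq_nonneg _)

/-- A matrix with orthonormal columns maps nonzero vectors to nonzero vectors. -/
lemma mulVec_ne_zero (h : IsEigenDecomposition K W l) {y : Fin n → ℂ} (hy : y ≠ 0) :
    W *ᵥ y ≠ 0 := by
  intro h0
  apply hy
  rw [← one_mulVec y, ← h.conjTranspose_mul, ← mulVec_mulVec, h0, mulVec_zero]

/-- Weyl's monotonicity principle. -/
lemma le_add (h : IsEigenDecomposition K W l) (h' : IsEigenDecomposition K' W' l') {t : ℝ}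
    (hle : ∀ x, realInner x (K *ᵥ x) ≤ realInner x (K' *ᵥ x) + t * realInner x x) (j : Fin n) :
    l j ≤ l' j + t := by
  obtain ⟨y, hy0, hy, hy'⟩ := exists_ne_zero_support_le j j.2 (W'ᴴ * W)
  have hpos := realInner_self_pos (h.mulVec_ne_zero hy0)
  simp only [← mulVec_mulVec] at hy'
  have h₁ := h.le_realInner j hy
  have h₂ := h'.realInner_le j hy'
  have h₃ := hle (W *ᵥ y)
  by_contra! hlt
  nlinarith

lemma trace_eq (h : IsEigenDecomposition K W l) : K.trace.re = ∑ i, l i := by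
  rw [h.eq, trace_mul_comm, ← mul_assoc, h.conjTranspose_mul, one_mul, trace_diagonal,
    Complex.re_sum]
  simp

end IsEigenDecomposition

lemma exists_perm_antitone {n : ℕ} (f : Fin n → ℝ) : ∃ τ : Equiv.Perm (Fin n), Antitone (f ∘ τ) := by
  refine ⟨Tuple.sort (fun i => - f i), fun i j hij => ?_⟩
  have := Tuple.monotone_sort (fun i => - f i) hij
  simpa using this

lemma Matrix.IsHermitian.isEigenDecomposition {n : ℕ} {K : Matrix (Fin n) (Fin n) ℂ}
    (hK : K.IsHermitian) (τ : Equiv.Perm (Fin n)) (hτ : Antitone (hK.eigenvalues ∘ τ)) :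
    IsEigenDecomposition K ((hK.eigenvectorUnitary : Matrix (Fin n) (Fin n) ℂ).submatrix id τ)
      (hK.eigenvalues ∘ τ) where
  antitone := hτ
  conjTranspose_mul := by
    have h : (hK.eigenvectorUnitary : Matrix (Fin n) (Fin n) ℂ)ᴴ *
      (hK.eigenvectorUnitary : Matrix (Fin n) (Fin n) ℂ) = 1 :=
        Unitary.coe_star_mul_self hK.eigenvectorUnitary
    rw [conjTranspose_submatrix, submatrix_mul _ _ τ id τ Function.bijective_id |>.symm, h]
    exact submatrix_one_equiv τ
  mul_conjTranspose := by
    have h : (hK.eigenvectorUnitary : Matrix (Fin n) (Fin n) ℂ) *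
      (hK.eigenvectorUnitary : Matrix (Fin n) (Fin n) ℂ)ᴴ = 1 :=
        Unitary.coe_mul_star_self hK.eigenvectorUnitary
    rw [conjTranspose_submatrix, submatrix_mul _ _ id τ id τ.bijective |>.symm, h, submatrix_id_id]
  eq := by
    have h := hK.spectral_theorem
    rw [Unitary.conjStarAlgAut_apply] at h
    have hd : diagonal (fun i => (((hK.eigenvalues ∘ τ) i : ℝ) : ℂ)) =
        (diagonal (RCLike.ofReal ∘ hK.eigenvalues) : Matrix (Fin n) (Fin n) ℂ).submatrix τ τ := by
      rw [submatrix_diagonal_equiv]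
      rfl
    rw [hd, conjTranspose_submatrix, submatrix_mul _ _ id τ τ τ.bijective |>.symm,
      submatrix_mul _ _ id τ id τ.bijective |>.symm, submatrix_id_id]
    exact h

lemma Matrix.IsHermitian.exists_isEigenDecomposition {n : ℕ} {K : Matrix (Fin n) (Fin n) ℂ}
    (hK : K.IsHermitian) : ∃ W l, IsEigenDecomposition K W l := by
  obtain ⟨τ, hτ⟩ := exists_perm_antitone hK.eigenvalues
  exact ⟨_, _, hK.isEigenDecomposition τ hτ⟩

section Sval

variable {m n : ℕ}

/-- The singular values are the square roots of the eigenvalues of the Gram matrix, in decreasing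
order. -/
lemma sval_eq_sqrt_eigenvalues (M : Matrix (Fin m) (Fin n) ℂ) {τ : Equiv.Perm (Fin n)}
    (hτ : Antitone ((isHermitian_conjTranspose_mul_self M).eigenvalues ∘ τ)) (j : Fin n) :
    sval M j = Real.sqrt ((isHermitian_conjTranspose_mul_self M).eigenvalues (τ j)) := by
  set e := (isHermitian_conjTranspose_mul_self M).eigenvalues with he
  have hperm : (List.insertionSort (· ≥ ·) ((List.ofFn e).map Real.sqrt)).Perm
      (List.ofFn (fun i => Real.sqrt (e (τ i)))) := by
    refine (List.perm_insertionSort _ _).trans ?_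
    rw [List.map_ofFn]
    exact (Equiv.Perm.ofFn_comp_perm τ (Real.sqrt ∘ e)).symm
  have hsorted : (List.ofFn (fun i => Real.sqrt (e (τ i)))).Pairwise (· ≥ ·) := by
    rw [List.pairwise_ofFn]
    exact fun i j hij => Real.sqrt_le_sqrt (hτ hij.le)
  have heq := hperm.eq_of_pairwise' (List.pairwise_insertionSort _ _) hsorted
  rw [sval, ← he, heq]
  simp [List.getD_eq_getElem?_getD]

lemma sval_nonneg (M : Matrix (Fin m) (Fin n) ℂ) (j : Fin n) : 0 ≤ sval M j := by
  obtain ⟨τ, hτ⟩ := exists_perm_antitone (isHermitian_conjTranspose_mul_self M).eigenvalues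
  rw [sval_eq_sqrt_eigenvalues M hτ]
  exact Real.sqrt_nonneg _

lemma sval_antitone (M : Matrix (Fin m) (Fin n) ℂ) : Antitone fun j : Fin n => sval M j := by
  obtain ⟨τ, hτ⟩ := exists_perm_antitone (isHermitian_conjTranspose_mul_self M).eigenvalues
  intro i j hij
  simp only [sval_eq_sqrt_eigenvalues M hτ]
  exact Real.sqrt_le_sqrt (hτ hij)

open scoped ComplexOrder in
lemma exists_isEigenDecomposition_sval (M : Matrix (Fin m) (Fin n) ℂ) :
    ∃ W, IsEigenDecomposition (Mᴴ * M) W (fun j => sval M j ^ 2) := by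
  obtain ⟨τ, hτ⟩ := exists_perm_antitone (isHermitian_conjTranspose_mul_self M).eigenvalues
  have hsq : (fun j : Fin n => sval M j ^ 2) =
      (isHermitian_conjTranspose_mul_self M).eigenvalues ∘ τ := by
    ext j
    rw [sval_eq_sqrt_eigenvalues M hτ,
      Real.sq_sqrt ((posSemidef_conjTranspose_mul_self M).eigenvalues_nonneg _)]
    rfl
  rw [hsq]
  exact ⟨_, (isHermitian_conjTranspose_mul_self M).isEigenDecomposition τ hτ⟩

lemma sum_sval (M : Matrix (Fin m) (Fin n) ℂ) (f : ℝ → ℝ) :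
    ∑ j ∈ Finset.range n, f (sval M j) =
      ∑ j, f (Real.sqrt ((isHermitian_conjTranspose_mul_self M).eigenvalues j)) := by
  obtain ⟨τ, hτ⟩ := exists_perm_antitone (isHermitian_conjTranspose_mul_self M).eigenvalues
  rw [Finset.sum_range, ← Equiv.sum_comp τ (fun j => f (Real.sqrt _))]
  exact Finset.sum_congr rfl fun j _ => by rw [sval_eq_sqrt_eigenvalues M hτ]

/-- The `j`-th eigenvalue of the Hermitian part of a matrix is at most the `j`-th singular
value. -/
lemma IsEigenDecomposition.le_sval {K W M : Matrix (Fin n) (Fin n) ℂ} {l : Fin n → ℝ}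
    (h : IsEigenDecomposition K W l)
    (hK : ∀ x, realInner x (K *ᵥ x) = realInner x (M *ᵥ x)) (j : Fin n) :
    l j ≤ sval M j := by
  obtain ⟨W', h'⟩ := exists_isEigenDecomposition_sval M
  obtain ⟨y, hy0, hy, hy'⟩ := exists_ne_zero_support_le j j.2 (W'ᴴ * W)
  have hpos := realInner_self_pos (h.mulVec_ne_zero hy0)
  simp only [← mulVec_mulVec] at hy'
  have h₁ := h.le_realInner j hy
  have h₂ := h'.realInner_le j hy'
  rw [hK] at h₁
  rw [← realInner_mulVec_self] at h₂
  set x := W *ᵥ y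
  have hs := sval_nonneg M j
  by_contra! hlt
  have hl : 0 < l j := hs.trans_lt hlt
  have h₃ := two_mul_realInner_le ((l j : ℂ) • x) (M *ᵥ x)
  have h₄ : realInner ((l j : ℂ) • x) (M *ᵥ x) = l j * realInner x (M *ᵥ x) := by
    simp [realInner]
  have h₅ : realInner ((l j : ℂ) • x) ((l j : ℂ) • x) = l j ^ 2 * realInner x x := by
    simp [realInner, pow_two]
    ring
  rw [h₄, h₅] at h₃
  have h₆ : sval M j ^ 2 < l j ^ 2 := by nlinarith
  nlinarith

/-- Left multiplication by a matrix of norm at most `a` and right multiplication by a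
matrix of norm at most `b` multiply each singular value by at most `a * b`. -/
lemma sval_mul_mul_le {m' : ℕ} (N : Matrix (Fin m) (Fin n) ℂ) (K : Matrix (Fin m') (Fin m) ℂ)
    (D : Matrix (Fin n) (Fin n) ℂ) {a b : ℝ} (ha : 0 ≤ a) (hb : 0 ≤ b)
    (hK : ∀ x, realInner (K *ᵥ x) (K *ᵥ x) ≤ a ^ 2 * realInner x x)
    (hD : ∀ x, realInner (D *ᵥ x) (D *ᵥ x) ≤ b ^ 2 * realInner x x) (j : Fin n) :
    sval (K * N * D) j ≤ a * b * sval N j := by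
  obtain ⟨W, h⟩ := exists_isEigenDecomposition_sval (K * N * D)
  obtain ⟨W', h'⟩ := exists_isEigenDecomposition_sval N
  obtain ⟨y, hy0, hy, hy'⟩ := exists_ne_zero_support_le j j.2 (W'ᴴ * (D * W))
  have hpos := realInner_self_pos (h.mulVec_ne_zero hy0)
  simp only [← mulVec_mulVec] at hy'
  have h₁ := h.le_realInner j hy
  have h₂ := h'.realInner_le j hy'
  rw [← realInner_mulVec_self] at h₁ h₂
  simp only [← mulVec_mulVec] at h₁
  set x := W *ᵥ y
  refine le_of_sq_le_sq ?_ (by have := sval_nonneg N j; positivity)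
  refine le_of_mul_le_mul_right ?_ hpos
  calc sval (K * N * D) j ^ 2 * realInner x x
      ≤ a ^ 2 * realInner (N *ᵥ D *ᵥ x) (N *ᵥ D *ᵥ x) := h₁.trans (hK _)
    _ ≤ a ^ 2 * (sval N j ^ 2 * (b ^ 2 * realInner x x)) := by
        gcongr
        exact h₂.trans (by gcongr; exact hD x)
    _ = (a * b * sval N j) ^ 2 * realInner x x := by ring

end Sval

section Majorization

lemma rpow_tangent_le {c d p : ℝ} (hc : 0 ≤ c) (hd : 0 ≤ d) (hp : 1 ≤ p) :
    d ^ p + p * d ^ (p - 1) * (c - d) ≤ c ^ p := by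
  rcases hd.eq_or_lt with rfl | hd
  · rcases hp.eq_or_lt with rfl | hp
    · simp
    · rw [Real.zero_rpow (by linarith), Real.zero_rpow (by linarith)]
      simpa using Real.rpow_nonneg hc p
  · have h := one_add_mul_self_le_rpow_one_add (s := c / d - 1)
      (by linarith [div_nonneg hc hd.le]) hp
    rw [show 1 + (c / d - 1) = c / d by ring, Real.div_rpow hc hd.le,
      le_div_iff₀ (Real.rpow_pos_of_pos hd p)] at h
    rw [Real.rpow_sub_one hd.ne']
    calc _ = (1 + p * (c / d - 1)) * d ^ p := by field_simp
      _ ≤ _ := h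

/-- Abel's inequality. -/
lemma mul_sum_le_sum_mul_of_antitone {w e : ℕ → ℝ} (hw : Antitone w) :
    ∀ k : ℕ, (∀ r ≤ k, 0 ≤ ∑ j ∈ Finset.range r, e j) →
      w k * ∑ j ∈ Finset.range k, e j ≤ ∑ j ∈ Finset.range k, w j * e j
  | 0, _ => by simp
  | k + 1, he => by
    have ih := mul_sum_le_sum_mul_of_antitone hw k fun r hr => he r (by omega)
    have h₁ : w (k + 1) * ∑ j ∈ Finset.range (k + 1), e j ≤
        w k * ∑ j ∈ Finset.range (k + 1), e j :=
      mul_le_mul_of_nonneg_right (hw (Nat.le_succ k)) (he _ le_rfl)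
    refine h₁.trans ?_
    rw [Finset.sum_range_succ, Finset.sum_range_succ, mul_add]
    linarith

lemma sum_rpow_le_of_sum_range_le {c d : ℕ → ℝ} {k : ℕ} {p : ℝ} (hc : ∀ j, 0 ≤ c j)
    (hd : ∀ j, 0 ≤ d j) (hda : Antitone d) (hp : 1 ≤ p)
    (h : ∀ r ≤ k, ∑ j ∈ Finset.range r, d j ≤ ∑ j ∈ Finset.range r, c j) :
    ∑ j ∈ Finset.range k, d j ^ p ≤ ∑ j ∈ Finset.range k, c j ^ p := by
  have hw : Antitone fun j => p * d j ^ (p - 1) := fun i j hij =>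
    mul_le_mul_of_nonneg_left (Real.rpow_le_rpow (hd j) (hda hij) (by linarith)) (by linarith)
  have hsum : ∀ r ≤ k, 0 ≤ ∑ j ∈ Finset.range r, (c j - d j) := fun r hr => by
    rw [Finset.sum_sub_distrib]
    linarith [h r hr]
  have h₁ := mul_sum_le_sum_mul_of_antitone hw k hsum
  have h₂ : 0 ≤ p * d k ^ (p - 1) * ∑ j ∈ Finset.range k, (c j - d j) :=
    mul_nonneg (mul_nonneg (by linarith) (Real.rpow_nonneg (hd k) _)) (hsum k le_rfl)
  have h₃ := Finset.sum_le_sum fun j (_ : j ∈ Finset.range k) => rpow_tangent_le (hc j) (hd j) hp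
  rw [Finset.sum_add_distrib] at h₃
  linarith

lemma sum_range_le_of_sum_max_le {c d : ℕ → ℝ} {k : ℕ} (hc : ∀ j, 0 ≤ c j)
    (hca : Antitone c)
    (h : ∀ t, 0 ≤ t → ∑ j ∈ Finset.range k, max (d j - t) 0 ≤
      ∑ j ∈ Finset.range k, max (c j - t) 0) (r : ℕ) (hr : r ≤ k) :
    ∑ j ∈ Finset.range r, d j ≤ ∑ j ∈ Finset.range r, c j := by
  rcases r with _ | s
  · simp
  have hsub : Finset.range (s + 1) ⊆ Finset.range k := Finset.range_subset_range.mpr hr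
  have h₁ : ∑ j ∈ Finset.range (s + 1), (d j - c s) ≤
      ∑ j ∈ Finset.range k, max (d j - c s) 0 :=
    (Finset.sum_le_sum fun j _ => le_max_left _ _).trans
      (Finset.sum_le_sum_of_subset_of_nonneg hsub fun j _ _ => le_max_right _ _)
  have h₂ : ∑ j ∈ Finset.range k, max (c j - c s) 0 =
      ∑ j ∈ Finset.range (s + 1), (c j - c s) := by
    rw [← Finset.sum_subset hsub]
    · refine Finset.sum_congr rfl fun j hj => max_eq_left ?_
      have : j ≤ s := by simpa [Nat.lt_succ_iff] using hj
      linarith [hca this]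
    · intro j _ hj
      have : s ≤ j := by simp at hj; omega
      exact max_eq_right (by linarith [hca this])
  have h₃ := (h₁.trans (h (c s) (hc s))).trans_eq h₂
  simp only [Finset.sum_sub_distrib] at h₃
  linarith

/-- Extension by zero of a decreasing nonnegative finite sequence is decreasing. -/
lemma antitone_extend_zero {k : ℕ} {f : Fin k → ℝ} (hf : Antitone f) (h0 : ∀ j, 0 ≤ f j) :
    Antitone fun j : ℕ => if h : j < k then f ⟨j, h⟩ else 0 := by
  intro i j hij
  by_cases hj : j < k
  · have hi : i < k := by omega
    simp only [hi, hj, dif_pos]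
    exact hf hij
  · by_cases hi : i < k
    · simpa [hi, hj] using h0 _
    · simp [hi, hj]

lemma sum_rpow_le_of_sum_max_le {k : ℕ} {c d : Fin k → ℝ} {p : ℝ} (hc : ∀ j, 0 ≤ c j)
    (hd : ∀ j, 0 ≤ d j) (hca : Antitone c) (hp : 1 ≤ p)
    (h : ∀ t, 0 ≤ t → ∑ j, max (d j - t) 0 ≤ ∑ j, max (c j - t) 0) :
    ∑ j, d j ^ p ≤ ∑ j, c j ^ p := by
  obtain ⟨τ, hτ⟩ := exists_perm_antitone d
  let c' : ℕ → ℝ := fun j => if h : j < k then c ⟨j, h⟩ else 0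
  let d' : ℕ → ℝ := fun j => if h : j < k then (d ∘ τ) ⟨j, h⟩ else 0
  have hc' : ∀ j, 0 ≤ c' j := fun j => by
    by_cases hj : j < k <;> simp [c', hj, hc]
  have hd' : ∀ j, 0 ≤ d' j := fun j => by
    by_cases hj : j < k <;> simp [d', hj, hd]
  have hcsum (f : ℝ → ℝ) : ∑ j ∈ Finset.range k, f (c' j) = ∑ j, f (c j) := by
    rw [Finset.sum_range]
    simp [c']
  have hdsum (f : ℝ → ℝ) : ∑ j ∈ Finset.range k, f (d' j) = ∑ j, f (d j) := by
    rw [Finset.sum_range, ← Equiv.sum_comp τ fun j => f (d j)]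
    simp [d']
  rw [← hcsum (· ^ p), ← hdsum (· ^ p)]
  refine sum_rpow_le_of_sum_range_le hc' hd' (antitone_extend_zero hτ fun j => hd _) hp
    (sum_range_le_of_sum_max_le hc' (antitone_extend_zero hca hc) fun t ht => ?_)
  rw [hcsum (fun x => max (x - t) 0), hdsum (fun x => max (x - t) 0)]
  exact h t ht

end Majorization

section Lidskii

variable {k : ℕ}

lemma isHermitian_half_add_conjTranspose (M : Matrix (Fin k) (Fin k) ℂ) :
    ((1 / 2 : ℂ) • (M + Mᴴ)).IsHermitian := by
  rw [Matrix.IsHermitian, conjTranspose_smul, conjTranspose_add, conjTranspose_conjTranspose,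
    add_comm]
  simp

lemma realInner_half_add_conjTranspose (M : Matrix (Fin k) (Fin k) ℂ) (x : Fin k → ℂ) :
    realInner x (((1 / 2 : ℂ) • (M + Mᴴ)) *ᵥ x) = realInner x (M *ᵥ x) := by
  have h : realInner x (Mᴴ *ᵥ x) = realInner x (M *ᵥ x) := by
    rw [realInner_mulVec_right, conjTranspose_conjTranspose, realInner_comm]
  rw [smul_mulVec, add_mulVec]
  simp only [realInner, dotProduct_smul, dotProduct_add] at h ⊢
  simp [h]
  ring

/-- If a Hermitian matrix with eigenvalues `s` is the sum of `M` and `X`, then the differences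
between `s` and the singular values of `M` are weakly majorized by the singular values of `X`. -/
lemma sum_max_sub_sval_le {S W M X : Matrix (Fin k) (Fin k) ℂ} {s : Fin k → ℝ}
    (hS : IsEigenDecomposition S W s) (hSMX : S = M + X) (t : ℝ) :
    ∑ j, max (s j - sval M j - t) 0 ≤ ∑ j : Fin k, max (sval X j - t) 0 := by
  obtain ⟨WB, b, hB⟩ := (isHermitian_half_add_conjTranspose M).exists_isEigenDecomposition
  obtain ⟨WC, c, hC⟩ := (isHermitian_half_add_conjTranspose X).exists_isEigenDecomposition
  set B := (1 / 2 : ℂ) • (M + Mᴴ)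
  set C := (1 / 2 : ℂ) • (X + Xᴴ)
  set P := WC * diagonal (fun i => ((max (c i - t) 0 : ℝ) : ℂ)) * WCᴴ with hPdef
  have hP : IsEigenDecomposition P WC fun i => max (c i - t) 0 :=
    ⟨fun i j hij => max_le_max_right _ (by linarith [hC.antitone hij]), hC.2, hC.3, rfl⟩
  have hPherm : P.IsHermitian := by
    refine isHermitian_mul_mul_conjTranspose _ (isHermitian_diagonal_of_self_adjoint _ ?_)
    ext i
    simp
  have hBherm : B.IsHermitian := isHermitian_half_add_conjTranspose M
  obtain ⟨WE, e, hE⟩ := (hBherm.add hPherm).exists_isEigenDecomposition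
  have hPnonneg (x : Fin k → ℂ) : 0 ≤ realInner x (P *ᵥ x) := by
    rw [hP.realInner_eq]
    exact Finset.sum_nonneg fun i _ => mul_nonneg (le_max_right _ _) (Complex.normSq_nonneg _)
  have hCP (x : Fin k → ℂ) :
      realInner x (C *ᵥ x) ≤ realInner x (P *ᵥ x) + t * realInner x x := by
    rw [hP.realInner_eq, hC.realInner_eq, hC.realInner_self_eq, Finset.mul_sum,
      ← Finset.sum_add_distrib]
    refine Finset.sum_le_sum fun i _ => ?_
    rw [← add_mul]
    exact mul_le_mul_of_nonneg_right (by linarith [le_max_left (c i - t) 0])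
      (Complex.normSq_nonneg _)
  have hbe (j : Fin k) : b j ≤ e j := by
    refine (hB.le_add hE (t := 0) (fun x => ?_) j).trans_eq (add_zero _)
    rw [add_mulVec, realInner_add_right]
    linarith [hPnonneg x]
  have hse (j : Fin k) : s j ≤ e j + t := by
    refine hS.le_add hE (fun x => ?_) j
    rw [hSMX, add_mulVec, add_mulVec, realInner_add_right, realInner_add_right,
      ← realInner_half_add_conjTranspose M, ← realInner_half_add_conjTranspose X]
    linarith [hCP x]
  have hbM := hB.le_sval (realInner_half_add_conjTranspose M)
  have hcX := hC.le_sval (realInner_half_add_conjTranspose X)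
  have htrace : ∑ j, (e j - b j) = ∑ j, max (c j - t) 0 := by
    rw [Finset.sum_sub_distrib, ← hE.trace_eq, ← hB.trace_eq, ← hP.trace_eq, trace_add,
      Complex.add_re]
    ring
  calc ∑ j, max (s j - sval M j - t) 0 ≤ ∑ j, (e j - b j) :=
        Finset.sum_le_sum fun j _ =>
          max_le (by linarith [hse j, hbM j]) (by linarith [hbe j])
    _ = ∑ j, max (c j - t) 0 := htrace
    _ ≤ ∑ j : Fin k, max (sval X j - t) 0 :=
        Finset.sum_le_sum fun j _ => max_le_max_right _ (by linarith [hcX j])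

end Lidskii

section DiagRect

lemma diagRect_self (σ : ℕ → ℝ) (k : ℕ) :
    diagRect σ 0 k k = diagonal fun i : Fin k => (σ i : ℂ) := by
  ext i j
  simp [diagRect, diagonal_apply, Fin.ext_iff]

lemma diagRect_sub (σ σ' : ℕ → ℝ) (off a b : ℕ) :
    diagRect σ off a b - diagRect σ' off a b = diagRect (fun i => σ i - σ' i) off a b := by
  ext i j
  by_cases h : (i : ℕ) = j <;> simp [diagRect, h]

lemma conjTranspose_diagRect (σ : ℕ → ℝ) (off a b : ℕ) :
    (diagRect σ off a b)ᴴ = diagRect σ off b a := by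
  ext i j
  by_cases h : (i : ℕ) = j
  · simp [diagRect, h]
  · simp [diagRect, h, Ne.symm h]

lemma conjTranspose_diagRect_mul_self (σ : ℕ → ℝ) (off a b : ℕ) :
    (diagRect σ off a b)ᴴ * diagRect σ off a b =
      diagonal fun j : Fin b => ((if (j : ℕ) < a then σ (off + j) ^ 2 else 0 : ℝ) : ℂ) := by
  ext i j
  simp only [mul_apply, conjTranspose_apply, diagRect, of_apply, diagonal_apply]
  by_cases hi : (i : ℕ) < a
  · rw [Finset.sum_eq_single (⟨i, hi⟩ : Fin a)]
    · by_cases hij : i = j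
      · subst hij
        simp [hi, pow_two]
      · simp [hij, Fin.val_ne_of_ne hij]
    · intro l _ hl
      have : (l : ℕ) ≠ i := fun h => hl (Fin.ext h)
      simp [this]
    · simp
  · rw [Finset.sum_eq_zero]
    · simp [hi]
    · intro l _
      have : (l : ℕ) ≠ i := by omega
      simp [this]

lemma realInner_diagRect_mulVec (σ : ℕ → ℝ) (off a b : ℕ) (x : Fin b → ℂ) :
    realInner (diagRect σ off a b *ᵥ x) (diagRect σ off a b *ᵥ x) =
      ∑ j : Fin b, (if (j : ℕ) < a then σ (off + j) ^ 2 else 0) * Complex.normSq (x j) := by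
  rw [realInner_mulVec_self, conjTranspose_diagRect_mul_self, realInner_diagonal]

lemma realInner_diagRect_mulVec_le {σ : ℕ → ℝ} (hσ0 : ∀ i, 0 ≤ σ i)
    (hσm : ∀ i j, i ≤ j → σ j ≤ σ i) {off a b : ℕ} (j : ℕ) {x : Fin b → ℂ}
    (hx : ∀ i : Fin b, (i : ℕ) < j → x i = 0) :
    realInner (diagRect σ off a b *ᵥ x) (diagRect σ off a b *ᵥ x) ≤
      σ (off + j) ^ 2 * realInner x x := by
  rw [realInner_diagRect_mulVec, realInner_self, Finset.mul_sum]
  refine Finset.sum_le_sum fun i _ => ?_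
  rcases lt_or_ge (i : ℕ) j with hi | hi
  · simp [hx i hi]
  · refine mul_le_mul_of_nonneg_right ?_ (Complex.normSq_nonneg _)
    split_ifs
    · exact pow_le_pow_left₀ (hσ0 _) (hσm _ _ (by omega)) 2
    · positivity

lemma le_realInner_diagRect_mulVec {σ : ℕ → ℝ} (hσ0 : ∀ i, 0 ≤ σ i)
    (hσm : ∀ i j, i ≤ j → σ j ≤ σ i) {b : ℕ} (j : ℕ) {x : Fin b → ℂ}
    (hx : ∀ i : Fin b, j < (i : ℕ) → x i = 0) :
    σ j ^ 2 * realInner x x ≤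
      realInner (diagRect σ 0 b b *ᵥ x) (diagRect σ 0 b b *ᵥ x) := by
  rw [realInner_diagRect_mulVec, realInner_self, Finset.mul_sum]
  refine Finset.sum_le_sum fun i _ => ?_
  rcases lt_or_ge j (i : ℕ) with hi | hi
  · simp [hx i hi]
  · refine mul_le_mul_of_nonneg_right ?_ (Complex.normSq_nonneg _)
    simpa using pow_le_pow_left₀ (hσ0 _) (hσm _ _ hi) 2

lemma sum_sval_diagRect (σ : ℕ → ℝ) (off a b : ℕ) (f : ℝ → ℝ) :
    ∑ j ∈ Finset.range b, f (sval (diagRect σ off a b) j) =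
      ∑ j : Fin b, f (if (j : ℕ) < a then |σ (off + j)| else 0) := by
  rw [sum_sval]
  set hM := isHermitian_conjTranspose_mul_self (diagRect σ off a b)
  have hroots := hM.roots_charpoly_eq_eigenvalues
  have hpoly : ((diagRect σ off a b)ᴴ * diagRect σ off a b).charpoly.roots =
      Finset.univ.val.map fun j : Fin b =>
        ((if (j : ℕ) < a then σ (off + j) ^ 2 else 0 : ℝ) : ℂ) := by
    rw [conjTranspose_diagRect_mul_self, charpoly_diagonal, Polynomial.roots_prod]
    · simp
    · exact Finset.prod_ne_zero_iff.mpr fun i _ => Polynomial.X_sub_C_ne_zero _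
  rw [hpoly] at hroots
  have hsum := congrArg (fun s => (s.map fun z : ℂ => f (Real.sqrt z.re)).sum) hroots
  simp only [Multiset.map_map, Function.comp_def, Complex.ofReal_re] at hsum
  refine Eq.trans (Eq.symm hsum) (Finset.sum_congr rfl fun j _ => ?_)
  split_ifs <;> simp [Real.sqrt_sq_eq_abs]

end DiagRect

section Blocks

variable {a b c : ℕ}

lemma conjTranspose_colsL_mul_colsL {M : Matrix (Fin a) (Fin (b + c)) ℂ} (hM : Mᴴ * M = 1) :
    (colsL M)ᴴ * colsL M = 1 := by
  rw [colsL, conjTranspose_submatrix, ← submatrix_mul _ _ _ id _ Function.bijective_id, hM]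
  exact submatrix_one _ (Fin.castAdd_injective b c)

lemma conjTranspose_colsR_mul_colsR {M : Matrix (Fin a) (Fin (b + c)) ℂ} (hM : Mᴴ * M = 1) :
    (colsR M)ᴴ * colsR M = 1 := by
  rw [colsR, conjTranspose_submatrix, ← submatrix_mul _ _ _ id _ Function.bijective_id, hM]
  exact submatrix_one _ (Fin.natAdd_injective c b)

lemma conjTranspose_colsL_mul_colsR {M : Matrix (Fin a) (Fin (b + c)) ℂ} (hM : Mᴴ * M = 1) :
    (colsL M)ᴴ * colsR M = 0 := by
  rw [colsL, colsR, conjTranspose_submatrix, ← submatrix_mul _ _ _ id _ Function.bijective_id, hM]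
  ext i j
  have : (i : ℕ) ≠ b + j := by omega
  simp [one_apply, Fin.ext_iff, this]

lemma conjTranspose_colsR_mul_colsL {M : Matrix (Fin a) (Fin (b + c)) ℂ} (hM : Mᴴ * M = 1) :
    (colsR M)ᴴ * colsL M = 0 := by
  simpa using congrArg conjTranspose (conjTranspose_colsL_mul_colsR hM)

lemma mul_diagRect_mul_conjTranspose {k m₂ n₂ : ℕ} (U : Matrix (Fin a) (Fin (k + m₂)) ℂ)
    (V : Matrix (Fin b) (Fin (k + n₂)) ℂ) (σ : ℕ → ℝ) :
    U * diagRect σ 0 (k + m₂) (k + n₂) * Vᴴ =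
      colsL U * diagRect σ 0 k k * (colsL V)ᴴ + colsR U * diagRect σ k m₂ n₂ * (colsR V)ᴴ := by
  have h₁ (i : Fin k) (j : Fin n₂) : (i : ℕ) ≠ k + j := by omega
  have h₂ (i : Fin m₂) (j : Fin k) : k + (i : ℕ) ≠ j := by omega
  ext i j
  simp [mul_apply, Fin.sum_univ_add, colsL, colsR, diagRect, h₁, h₂]

end Blocks

section Resolvent

variable {k m r : ℕ}

open scoped ComplexOrder in
lemma isUnit_det_one_add_conjTranspose_mul_self (F : Matrix (Fin m) (Fin k) ℂ) :
    IsUnit (1 + Fᴴ * F).det :=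
  (isUnit_iff_isUnit_det _).mp
    (PosDef.one.add_posSemidef (posSemidef_conjTranspose_mul_self F)).isUnit

lemma realInner_resolvent_mul_conjTranspose_le (F : Matrix (Fin m) (Fin k) ℂ) (z : Fin m → ℂ) :
    realInner (((1 + Fᴴ * F)⁻¹ * Fᴴ) *ᵥ z) (((1 + Fᴴ * F)⁻¹ * Fᴴ) *ᵥ z) ≤ realInner z z := by
  set u := ((1 + Fᴴ * F)⁻¹ * Fᴴ) *ᵥ z with hu
  have h : (1 + Fᴴ * F) *ᵥ u = Fᴴ *ᵥ z := by
    rw [hu, mulVec_mulVec, ← Matrix.mul_assoc,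
      mul_nonsing_inv _ (isUnit_det_one_add_conjTranspose_mul_self F), Matrix.one_mul]
  have h₁ := congrArg (realInner u) h
  rw [add_mulVec, one_mulVec, realInner_add_right, ← realInner_mulVec_self,
    realInner_mulVec_right Fᴴ, conjTranspose_conjTranspose] at h₁
  linarith [two_mul_realInner_le (F *ᵥ u) z, realInner_self_nonneg u,
    realInner_self_nonneg (F *ᵥ u)]

/-- If `Gᴴ * G = 1 + Fᴴ * F`, then `(1 + Fᴴ * F)⁻¹ * Gᴴ` is a contraction. -/
lemma realInner_resolvent_mul_le {F : Matrix (Fin m) (Fin k) ℂ} {G : Matrix (Fin r) (Fin k) ℂ}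
    (hG : Gᴴ * G = 1 + Fᴴ * F) (z : Fin r → ℂ) :
    realInner (((1 + Fᴴ * F)⁻¹ * Gᴴ) *ᵥ z) (((1 + Fᴴ * F)⁻¹ * Gᴴ) *ᵥ z) ≤ realInner z z := by
  set u := ((1 + Fᴴ * F)⁻¹ * Gᴴ) *ᵥ z with hu
  have h : (1 + Fᴴ * F) *ᵥ u = Gᴴ *ᵥ z := by
    rw [hu, mulVec_mulVec, ← Matrix.mul_assoc,
      mul_nonsing_inv _ (isUnit_det_one_add_conjTranspose_mul_self F), Matrix.one_mul]
  have h₁ := congrArg (realInner u) h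
  rw [← hG, ← realInner_mulVec_self, realInner_mulVec_right Gᴴ,
    conjTranspose_conjTranspose] at h₁
  have h₂ : realInner (G *ᵥ u) (G *ᵥ u) = realInner u u + realInner (F *ᵥ u) (F *ᵥ u) := by
    rw [realInner_mulVec_self, hG, add_mulVec, one_mulVec, realInner_add_right,
      ← realInner_mulVec_self]
  linarith [two_mul_realInner_le (G *ᵥ u) z, realInner_self_nonneg (F *ᵥ u)]

end Resolvent

section Compression

variable {k r n : ℕ}

/-- Compressing a matrix by a contraction on the left and an isometry on the right does not
increase its singular values. -/
lemma sval_compression_le {σ : ℕ → ℝ} (hσ0 : ∀ i, 0 ≤ σ i) (hσm : ∀ i j, i ≤ j → σ j ≤ σ i)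
    {P : Matrix (Fin r) (Fin r) ℂ} {V : Matrix (Fin n) (Fin r) ℂ} {V₁ : Matrix (Fin n) (Fin k) ℂ}
    {E : Matrix (Fin k) (Fin r) ℂ} (hP : Pᴴ * P = 1) (hV : Vᴴ * V = 1) (hV₁ : V₁ᴴ * V₁ = 1)
    (hE : ∀ z, realInner (E *ᵥ z) (E *ᵥ z) ≤ realInner z z) (j : Fin k) :
    sval (E * (P * diagRect σ 0 r r * Vᴴ) * V₁) j ≤ σ j := by
  obtain ⟨W, h⟩ := exists_isEigenDecomposition_sval (E * (P * diagRect σ 0 r r * Vᴴ) * V₁)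
  obtain ⟨y, hy0, hy, hy'⟩ := exists_ne_zero_support_le j j.2 (Vᴴ * (V₁ * W))
  have hpos := realInner_self_pos (h.mulVec_ne_zero hy0)
  simp only [← mulVec_mulVec] at hy'
  have h₁ := h.le_realInner j hy
  rw [← realInner_mulVec_self] at h₁
  simp only [← mulVec_mulVec] at h₁
  set x := W *ᵥ y
  have h₂ := realInner_diagRect_mulVec_le hσ0 hσm (off := 0) (a := r) j hy'
  rw [zero_add] at h₂
  refine le_of_sq_le_sq ?_ (hσ0 j)
  refine le_of_mul_le_mul_right ?_ hpos
  refine h₁.trans ((hE _).trans ?_)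
  rw [realInner_mulVec_isometry hP]
  refine h₂.trans (mul_le_mul_of_nonneg_left ?_ (sq_nonneg _))
  exact (realInner_conjTranspose_mulVec_le hV _).trans_eq (realInner_mulVec_isometry hV₁ x)

/-- The singular values of `Qᴴ * A`, with `Q` having orthonormal columns, are dominated by those
of `A`. -/
lemma singularValue_le_of_conjTranspose_mul {a r : ℕ} {σ σ' : ℕ → ℝ} (hσ0 : ∀ i, 0 ≤ σ i)
    (hσm : ∀ i j, i ≤ j → σ j ≤ σ i) (hσ'0 : ∀ i, 0 ≤ σ' i) (hσ'm : ∀ i j, i ≤ j → σ' j ≤ σ' i)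
    {U : Matrix (Fin a) (Fin a) ℂ} {V : Matrix (Fin n) (Fin n) ℂ} {Q : Matrix (Fin a) (Fin r) ℂ}
    {P : Matrix (Fin r) (Fin r) ℂ} {V' : Matrix (Fin n) (Fin r) ℂ}
    (hU : Uᴴ * U = 1) (hV : Vᴴ * V = 1) (hQ : Qᴴ * Q = 1) (hP : Pᴴ * P = 1) (hV' : V'ᴴ * V' = 1)
    (h : Qᴴ * (U * diagRect σ 0 a n * Vᴴ) = P * diagRect σ' 0 r r * V'ᴴ) (j : ℕ) (hj : j < r) :
    σ' j ≤ σ j := by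
  obtain ⟨y, hy0, hy, hy'⟩ := exists_ne_zero_support_le j hj (Vᴴ * V')
  have hpos := realInner_self_pos hy0
  simp only [← mulVec_mulVec] at hy'
  have h₁ := le_realInner_diagRect_mulVec hσ'0 hσ'm j hy
  have h₂ := realInner_diagRect_mulVec_le hσ0 hσm (off := 0) (a := a) j hy'
  rw [zero_add] at h₂
  have h₃ : P *ᵥ (diagRect σ' 0 r r *ᵥ y) =
      Qᴴ *ᵥ (U *ᵥ (diagRect σ 0 a n *ᵥ (Vᴴ *ᵥ (V' *ᵥ y)))) := by
    have := congrArg (· *ᵥ (V' *ᵥ y)) h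
    simp only [← mulVec_mulVec] at this
    rw [this, mulVec_mulVec y V'ᴴ V', hV', one_mulVec]
  refine le_of_sq_le_sq ?_ (hσ0 j)
  refine le_of_mul_le_mul_right ?_ hpos
  refine h₁.trans ?_
  rw [← realInner_mulVec_isometry hP, h₃]
  refine (realInner_conjTranspose_mulVec_le hQ _).trans ?_
  rw [realInner_mulVec_isometry hU]
  refine h₂.trans (mul_le_mul_of_nonneg_left ?_ (sq_nonneg _))
  exact (realInner_conjTranspose_mulVec_le hV _).trans_eq (realInner_mulVec_isometry hV' y)

end Compression

section SubspaceIteration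

open scoped ComplexOrder in
lemma isUnit_det_self_mul_conjTranspose_of_rank_eq {a b : ℕ} {M : Matrix (Fin a) (Fin b) ℂ}
    (hM : M.rank = a) : IsUnit (M * Mᴴ).det := by
  rw [← isUnit_iff_isUnit_det, ← mulVec_surjective_iff_isUnit]
  have h : (M * Mᴴ).rank = a := by rw [rank_self_mul_conjTranspose, hM]
  refine (LinearMap.range_eq_top (f := (M * Mᴴ).mulVecLin)).mp (Submodule.eq_top_of_finrank_eq ?_)
  rw [Module.finrank_fin_fun]
  exact h

lemma mul_rpinv {a b : ℕ} {M : Matrix (Fin a) (Fin b) ℂ} (hM : M.rank = a) :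
    M * rpinv M = 1 := by
  rw [rpinv, ← Matrix.mul_assoc, mul_nonsing_inv _ (isUnit_det_self_mul_conjTranspose_of_rank_eq hM)]

lemma pow_mul_of_mul_eq {a b : ℕ} {K : Matrix (Fin a) (Fin a) ℂ} {M : Matrix (Fin a) (Fin b) ℂ}
    {T : Matrix (Fin b) (Fin b) ℂ} (h : K * M = M * T) (q : ℕ) : K ^ q * M = M * T ^ q := by
  induction q with
  | zero => simp
  | succ q ih => rw [pow_succ, Matrix.mul_assoc, h, ← Matrix.mul_assoc, ih, Matrix.mul_assoc, ← pow_succ]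

lemma realInner_pow_mulVec_le {a : ℕ} {K : Matrix (Fin a) (Fin a) ℂ} {s : ℝ}
    (hK : ∀ x, realInner (K *ᵥ x) (K *ᵥ x) ≤ s ^ 2 * realInner x x) (q : ℕ) (x : Fin a → ℂ) :
    realInner (K ^ q *ᵥ x) (K ^ q *ᵥ x) ≤ (s ^ q) ^ 2 * realInner x x := by
  induction q with
  | zero => simp
  | succ q ih =>
    rw [pow_succ', ← mulVec_mulVec]
    refine (hK _).trans ((mul_le_mul_of_nonneg_left ih (sq_nonneg s)).trans_eq ?_)
    ring

/-- The decreases of the leading `k` singular values under the subspace iteration are bounded by a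
sequence which is weakly majorized by the scaled singular values of `Σ_⊥ Ω₂ Ω₁†`. -/
lemma sum_max_singularValue_sub_le
    {k m₂ n₂ ρ : ℕ} (q : ℕ) (hk : 1 ≤ k)
    {A : Matrix (Fin (k + m₂)) (Fin (k + n₂)) ℂ}
    {U : Matrix (Fin (k + m₂)) (Fin (k + m₂)) ℂ}
    {V : Matrix (Fin (k + n₂)) (Fin (k + n₂)) ℂ}
    {σ : ℕ → ℝ}
    (hU : Uᴴ * U = 1) (hV : Vᴴ * V = 1)
    (hσ0 : ∀ i, 0 ≤ σ i) (hσm : ∀ i j, i ≤ j → σ j ≤ σ i)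
    (hA : A = U * diagRect σ 0 (k + m₂) (k + n₂) * Vᴴ)
    (hrank : 0 < σ (k - 1))
    {Ω : Matrix (Fin (k + n₂)) (Fin (k + ρ)) ℂ}
    (hΩ : ((colsL V)ᴴ * Ω).rank = k)
    {Q : Matrix (Fin (k + m₂)) (Fin (k + ρ)) ℂ}
    {R : Matrix (Fin (k + ρ)) (Fin (k + ρ)) ℂ}
    (hQ : Qᴴ * Q = 1)
    (hQR : (A * Aᴴ) ^ q * A * Ω = Q * R)
    {UB : Matrix (Fin (k + ρ)) (Fin (k + ρ)) ℂ}
    {Vh : Matrix (Fin (k + n₂)) (Fin (k + ρ)) ℂ}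
    {σh : ℕ → ℝ}
    (hUB : UBᴴ * UB = 1) (hVh : Vhᴴ * Vh = 1)
    (hσh0 : ∀ i, 0 ≤ σh i) (hσhm : ∀ i j, i ≤ j → σh j ≤ σh i)
    (hB : Qᴴ * A = UB * diagRect σh 0 (k + ρ) (k + ρ) * Vhᴴ) (t : ℝ) :
    ∑ j : Fin k, max (σ j - σh j - t) 0 ≤
      ∑ j : Fin k, max ((σ k / σ (k - 1)) ^ (2 * q) * sval (diagRect σ k m₂ n₂ *
        ((colsR V)ᴴ * Ω * rpinv ((colsL V)ᴴ * Ω))) j - t) 0 := by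
  have hσpos (i : Fin k) : 0 < σ i := hrank.trans_le (hσm _ _ (by omega))
  have hU₁ := conjTranspose_colsL_mul_colsL hU
  have hU₂ := conjTranspose_colsR_mul_colsR hU
  have hU₁₂ := conjTranspose_colsL_mul_colsR hU
  have hU₂₁ := conjTranspose_colsR_mul_colsL hU
  have hV₁ := conjTranspose_colsL_mul_colsL hV
  have hV₂ := conjTranspose_colsR_mul_colsR hV
  have hV₁₂ := conjTranspose_colsL_mul_colsR hV
  have hV₂₁ := conjTranspose_colsR_mul_colsL hV
  have hΩ₁ := mul_rpinv hΩ
  rw [mul_diagRect_mul_conjTranspose] at hA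
  set U₁ := colsL U
  set U₂ := colsR U
  set V₁ := colsL V
  set V₂ := colsR V
  set S := diagRect σ 0 k k with hSdef
  set T := diagRect σ k m₂ n₂ with hTdef
  set Ωi := rpinv (V₁ᴴ * Ω)
  set N := T * (V₂ᴴ * Ω * Ωi)
  have hSherm : Sᴴ = S := conjTranspose_diagRect ..
  have hAV₁ : A * V₁ = U₁ * S := by
    rw [hA, Matrix.add_mul, Matrix.mul_assoc, hV₁, Matrix.mul_assoc (U₂ * T), hV₂₁]
    simp
  have hAU₁ : Aᴴ * U₁ = V₁ * S := by
    rw [hA]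
    simp only [conjTranspose_add, conjTranspose_mul, conjTranspose_conjTranspose, Matrix.add_mul,
      Matrix.mul_assoc, hU₁, hU₂₁, hSherm]
    simp
  have hAU₂ : Aᴴ * U₂ = V₂ * Tᴴ := by
    rw [hA]
    simp only [conjTranspose_add, conjTranspose_mul, conjTranspose_conjTranspose, Matrix.add_mul,
      Matrix.mul_assoc, hU₂, hU₁₂]
    simp
  have hAV₂ : A * V₂ = U₂ * T := by
    rw [hA, Matrix.add_mul, Matrix.mul_assoc, hV₁₂, Matrix.mul_assoc (U₂ * T), hV₂]
    simp
  have hpow₁ : (A * Aᴴ) ^ q * U₁ = U₁ * (S * S) ^ q :=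
    pow_mul_of_mul_eq (by rw [Matrix.mul_assoc, hAU₁, ← Matrix.mul_assoc, hAV₁, Matrix.mul_assoc]) q
  have hpow₂ : (A * Aᴴ) ^ q * U₂ = U₂ * (T * Tᴴ) ^ q :=
    pow_mul_of_mul_eq (by rw [Matrix.mul_assoc, hAU₂, ← Matrix.mul_assoc, hAV₂, Matrix.mul_assoc]) q
  set D' : Matrix (Fin k) (Fin k) ℂ := diagonal fun i => (((σ i ^ (2 * q))⁻¹ : ℝ) : ℂ) with hD'
  set D : Matrix (Fin k) (Fin k) ℂ := diagonal fun i => (((σ i ^ (2 * q + 1))⁻¹ : ℝ) : ℂ) with hD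
  have hDS : D * S = D' := by
    rw [hD, hD', hSdef, diagRect_self, diagonal_mul_diagonal]
    congr 1
    ext i
    have := (hσpos i).ne'
    norm_cast
    field_simp
    ring
  have hSD : (S * S) ^ q * S * D = 1 := by
    rw [hD, hSdef, diagRect_self, diagonal_mul_diagonal, diagonal_pow, diagonal_mul_diagonal,
      diagonal_mul_diagonal, ← diagonal_one]
    congr 1
    ext i
    have := (hσpos i).ne'
    simp only [Pi.pow_apply]
    norm_cast
    field_simp
    ring
  set F := (T * Tᴴ) ^ q * N * D with hF
  set G := U₁ + U₂ * F with hG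
  have hGQ : G = Q * (R * Ωi * D) := by
    calc G = U₁ * ((S * S) ^ q * S * (V₁ᴴ * Ω * Ωi) * D) +
          U₂ * ((T * Tᴴ) ^ q * (T * (V₂ᴴ * Ω * Ωi)) * D) := by
          rw [hΩ₁, Matrix.mul_one, hSD, Matrix.mul_one]
      _ = (A * Aᴴ) ^ q * U₁ * (S * (V₁ᴴ * Ω * Ωi) * D) +
          (A * Aᴴ) ^ q * U₂ * (T * (V₂ᴴ * Ω * Ωi) * D) := by
          rw [hpow₁, hpow₂]
          simp only [Matrix.mul_assoc]
      _ = (A * Aᴴ) ^ q * A * Ω * Ωi * D := by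
          have h : (A * Aᴴ) ^ q * A = (A * Aᴴ) ^ q * (U₁ * S * V₁ᴴ + U₂ * T * V₂ᴴ) :=
            congrArg ((A * Aᴴ) ^ q * ·) hA
          rw [h]
          simp only [Matrix.mul_assoc, Matrix.add_mul, Matrix.mul_add]
      _ = Q * (R * Ωi * D) := by
          rw [hQR]
          simp only [Matrix.mul_assoc]
  have hGG : Gᴴ * G = 1 + Fᴴ * F := by
    rw [hG, conjTranspose_add, conjTranspose_mul, Matrix.add_mul, Matrix.mul_add, Matrix.mul_add,
      hU₁, ← Matrix.mul_assoc, hU₁₂, Matrix.mul_assoc, hU₂₁, Matrix.mul_assoc,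
      ← Matrix.mul_assoc U₂ᴴ, hU₂]
    simp
  have hGU : Gᴴ * U₁ = 1 := by
    rw [hG, conjTranspose_add, conjTranspose_mul, Matrix.add_mul, hU₁, Matrix.mul_assoc, hU₂₁]
    simp
  have hGQQ : Gᴴ * Q * Qᴴ = Gᴴ := by
    rw [hGQ, conjTranspose_mul, Matrix.mul_assoc _ Qᴴ Q, hQ, Matrix.mul_one]
  have hunit := isUnit_det_one_add_conjTranspose_mul_self F
  have hcontr := realInner_resolvent_mul_le hGG
  have hcontrF := realInner_resolvent_mul_conjTranspose_le F
  set H := (1 + Fᴴ * F)⁻¹ with hH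
  have hHS : H * S = H * Gᴴ * Q * (UB * diagRect σh 0 (k + ρ) (k + ρ) * Vhᴴ) * V₁ := by
    rw [← hB]
    calc H * S = H * (Gᴴ * U₁) * S := by rw [hGU, Matrix.mul_one]
      _ = H * (Gᴴ * Q * Qᴴ) * (A * V₁) := by
        rw [hGQQ, hAV₁]
        simp only [Matrix.mul_assoc]
      _ = _ := by simp only [Matrix.mul_assoc]
  have hX : S = H * S + H * Fᴴ * (T * Tᴴ) ^ q * N * D' := by
    calc S = H * (1 + Fᴴ * F) * S := by rw [hH, nonsing_inv_mul _ hunit, Matrix.one_mul]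
      _ = H * S + H * Fᴴ * (F * S) := by
        rw [Matrix.mul_add, Matrix.add_mul, Matrix.mul_one]
        simp only [Matrix.mul_assoc]
      _ = _ := by
        rw [hF, Matrix.mul_assoc _ D S, hDS]
        simp only [Matrix.mul_assoc]
  have hSeig : IsEigenDecomposition S 1 fun j : Fin k => σ j :=
    ⟨fun i j hij => hσm _ _ hij, by simp, by simp, by simp [hSdef, diagRect_self]⟩
  have hσh (j : Fin k) : sval (H * S) j ≤ σh j := by
    rw [hHS]
    refine sval_compression_le hσh0 hσhm hUB hVh hV₁ (fun z => ?_) j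
    rw [← mulVec_mulVec]
    exact (hcontr _).trans_eq (realInner_mulVec_isometry hQ z)
  have hTT (x : Fin m₂ → ℂ) : realInner ((T * Tᴴ) *ᵥ x) ((T * Tᴴ) *ᵥ x) ≤
      (σ k ^ 2) ^ 2 * realInner x x := by
    have h₁ (n m : ℕ) (z : Fin n → ℂ) :=
      realInner_diagRect_mulVec_le hσ0 hσm (off := k) (a := m) 0 (x := z) (by simp)
    rw [← mulVec_mulVec, hTdef, conjTranspose_diagRect]
    refine (h₁ _ _ _).trans ((mul_le_mul_of_nonneg_left (h₁ _ _ _) (sq_nonneg _)).trans_eq ?_)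
    rw [add_zero]
    ring
  have hD'le (x : Fin k → ℂ) : realInner (D' *ᵥ x) (D' *ᵥ x) ≤
      ((σ (k - 1) ^ (2 * q))⁻¹) ^ 2 * realInner x x := by
    rw [realInner_self, realInner_self, Finset.mul_sum]
    refine Finset.sum_le_sum fun i _ => ?_
    rw [hD', mulVec_diagonal, Complex.normSq_mul, Complex.normSq_ofReal, ← pow_two]
    refine mul_le_mul_of_nonneg_right ?_ (Complex.normSq_nonneg _)
    have := hσm i (k - 1) (by omega)
    have := inv_nonneg.mpr (pow_nonneg (hσ0 i) (2 * q))
    gcongr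
  have hsval (j : Fin k) : sval (H * Fᴴ * (T * Tᴴ) ^ q * N * D') j ≤
      (σ k / σ (k - 1)) ^ (2 * q) * sval N j := by
    refine (sval_mul_mul_le N _ D' (a := (σ k ^ 2) ^ q) (by positivity) (by positivity)
      (fun x => ?_) hD'le j).trans_eq ?_
    · rw [← mulVec_mulVec]
      exact (hcontrF _).trans (realInner_pow_mulVec_le hTT q x)
    · rw [div_pow, ← pow_mul, div_eq_mul_inv]
  calc ∑ j : Fin k, max (σ j - σh j - t) 0
      ≤ ∑ j : Fin k, max (σ j - sval (H * S) j - t) 0 :=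
        Finset.sum_le_sum fun j _ => max_le_max_right _ (by linarith [hσh j])
    _ ≤ ∑ j : Fin k, max (sval (H * Fᴴ * (T * Tᴴ) ^ q * N * D') j - t) 0 :=
        sum_max_sub_sval_le hSeig hX t
    _ ≤ _ := Finset.sum_le_sum fun j _ => max_le_max_right _ (by linarith [hsval j])

end SubspaceIteration

section Schatten

variable {k m n : ℕ}

lemma sval_zero_nonneg (M : Matrix (Fin m) (Fin n) ℂ) : 0 ≤ sval M 0 := by
  cases n with
  | zero => simp [sval]
  | succ n => exact sval_nonneg M 0

lemma sval_le_sval_zero (M : Matrix (Fin m) (Fin n) ℂ) (j : Fin n) : sval M j ≤ sval M 0 :=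
  sval_antitone M (show (⟨0, j.pos⟩ : Fin n) ≤ j from Nat.zero_le _)

lemma sval_diagRect_zero_le {σ : ℕ → ℝ} {off a b : ℕ} {t : ℝ} (ht : 0 ≤ t)
    (h : ∀ j : Fin b, (j : ℕ) < a → |σ (off + j)| ≤ t) : sval (diagRect σ off a b) 0 ≤ t := by
  cases b with
  | zero => simpa [sval] using ht
  | succ b =>
    have hsum := sum_sval_diagRect σ off a (b + 1) fun x => max (x - t) 0
    rw [Finset.sum_eq_zero (s := Finset.univ) fun j _ => ?_] at hsum
    · have := (Finset.sum_eq_zero_iff_of_nonneg fun _ _ => le_max_right _ _).mp hsum 0 (by simp)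
      linarith [le_max_left (sval (diagRect σ off a (b + 1)) 0 - t) 0]
    · split_ifs with hj
      · exact max_eq_right (sub_nonpos.mpr (h j hj))
      · exact max_eq_right (by linarith)

lemma abs_le_sval_diagRect_zero (σ : ℕ → ℝ) (off a : ℕ) {b : ℕ} (j : Fin b) (hj : (j : ℕ) < a) :
    |σ (off + j)| ≤ sval (diagRect σ off a b) 0 := by
  have hsum := sum_sval_diagRect σ off a b fun x => max (x - sval (diagRect σ off a b) 0) 0
  rw [Finset.sum_eq_zero (s := Finset.range b) fun i hi => max_eq_right (sub_nonpos.mpr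
    (sval_le_sval_zero _ ⟨i, Finset.mem_range.mp hi⟩))] at hsum
  have := (Finset.sum_eq_zero_iff_of_nonneg fun _ _ => le_max_right _ _).mp hsum.symm j (by simp)
  rw [if_pos hj] at this
  linarith [le_max_left (|σ (off + j)| - sval (diagRect σ off a b) 0) 0]

lemma add_rpow_one_div_le {x y p : ℝ} (hx : 0 ≤ x) (hy : 0 ≤ y) (hp : 1 ≤ p) :
    (x + y) ^ (1 / p) ≤ x ^ (1 / p) + y ^ (1 / p) := by
  have hp0 : 0 < p := zero_lt_one.trans_le hp
  lift x to NNReal using hx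
  lift y to NNReal using hy
  exact_mod_cast NNReal.rpow_add_le_add_rpow x y (by positivity) ((div_le_one hp0).mpr hp)

/-- A diagonal matrix whose leading entries are weakly majorized by `g` times the singular values of
`N` and whose trailing entries are dominated by those of a second diagonal matrix. -/
lemma schatten_diagRect_le {m₂ n₂ : ℕ} {d σ : ℕ → ℝ} {N : Matrix (Fin m) (Fin k) ℂ} {g : ℝ}
    (hg : 0 ≤ g) (hd : ∀ j : Fin k, 0 ≤ d j) (hdσ : ∀ j, |d (k + j)| ≤ |σ (k + j)|)
    (hN : ∀ t, ∑ j : Fin k, max (d j - t) 0 ≤ ∑ j : Fin k, max (g * sval N j - t) 0)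
    {p : ℝ≥0∞} (hp : 1 ≤ p) :
    schatten p (diagRect d 0 (k + m₂) (k + n₂)) ≤
      schatten p (diagRect σ k m₂ n₂) + g * schatten p N := by
  unfold schatten
  split_ifs with htop
  · have hT := sval_zero_nonneg (diagRect σ k m₂ n₂)
    have hgN := mul_nonneg hg (sval_zero_nonneg N)
    refine sval_diagRect_zero_le (by positivity) fun j => ?_
    refine Fin.addCases (fun i _ => ?_) (fun i hi => ?_) j
    · have h := hN (g * sval N 0)
      rw [Finset.sum_eq_zero fun j _ => max_eq_right (sub_nonpos.mpr
        (mul_le_mul_of_nonneg_left (sval_le_sval_zero N j) hg))] at h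
      have h' := (Finset.single_le_sum (fun _ _ => le_max_right _ _) (Finset.mem_univ i)).trans h
      have := (le_max_left _ _).trans h'
      simp only [Fin.val_castAdd, zero_add, abs_of_nonneg (hd i)]
      linarith
    · simp only [Fin.val_natAdd, add_lt_add_iff_left] at hi
      have := abs_le_sval_diagRect_zero σ k m₂ i hi
      simp only [Fin.val_natAdd, zero_add]
      linarith [hdσ i]
  · have hp' : 1 ≤ p.toReal := by simpa using ENNReal.toReal_mono htop hp
    set r := p.toReal
    have hr : 0 < r := zero_lt_one.trans_le hp'
    have hlead : ∑ j : Fin k, d j ^ r ≤ g ^ r * ∑ j ∈ Finset.range k, sval N j ^ r := by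
      rw [Finset.mul_sum, Finset.sum_range]
      refine (sum_rpow_le_of_sum_max_le (c := fun j : Fin k => g * sval N j)
        (fun j => mul_nonneg hg (sval_nonneg N j)) hd
        (fun i j hij => mul_le_mul_of_nonneg_left (sval_antitone N hij) hg) hp'
        fun t _ => hN t).trans_eq (Finset.sum_congr rfl fun j _ => ?_)
      exact Real.mul_rpow hg (sval_nonneg N j)
    have hS : 0 ≤ ∑ j ∈ Finset.range k, sval N j ^ r :=
      Finset.sum_nonneg fun j hj => Real.rpow_nonneg (sval_nonneg N ⟨j, Finset.mem_range.mp hj⟩) _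
    have htail : ∑ j ∈ Finset.range (k + n₂), sval (diagRect d 0 (k + m₂) (k + n₂)) j ^ r ≤
        ∑ j : Fin n₂, (if (j : ℕ) < m₂ then |σ (k + j)| else 0) ^ r +
          g ^ r * ∑ j ∈ Finset.range k, sval N j ^ r := by
      rw [sum_sval_diagRect d 0 (k + m₂) (k + n₂) (· ^ r), Fin.sum_univ_add, add_comm]
      refine add_le_add (Finset.sum_le_sum fun j _ => ?_) (le_trans (le_of_eq ?_) hlead)
      · simp only [Fin.val_natAdd, add_lt_add_iff_left, zero_add]
        split_ifs
        · exact Real.rpow_le_rpow (abs_nonneg _) (hdσ j) hr.le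
        · exact le_rfl
      · refine Finset.sum_congr rfl fun j _ => ?_
        have : (j : ℕ) < k + m₂ := by omega
        simp [this, abs_of_nonneg (hd j)]
    have hT : 0 ≤ ∑ j : Fin n₂, (if (j : ℕ) < m₂ then |σ (k + j)| else 0) ^ r :=
      Finset.sum_nonneg fun j _ => Real.rpow_nonneg (by split_ifs <;> positivity) _
    have hM : 0 ≤ ∑ j ∈ Finset.range (k + n₂), sval (diagRect d 0 (k + m₂) (k + n₂)) j ^ r :=
      Finset.sum_nonneg fun j hj => Real.rpow_nonneg (sval_nonneg _ ⟨j, Finset.mem_range.mp hj⟩) _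
    rw [sum_sval_diagRect σ k m₂ n₂ (· ^ r)]
    refine (Real.rpow_le_rpow hM htail (by positivity)).trans
      ((add_rpow_one_div_le hT (by positivity) hp').trans_eq ?_)
    rw [Real.mul_rpow (by positivity) hS, ← Real.rpow_mul hg, mul_one_div_cancel hr.ne',
      Real.rpow_one]

end Schatten

/-- Hoffman–Wielandt type bound for the singular values, Schatten-p norm version. -/
theorem hoffman_wielandt_schatten
    {k m₂ n₂ ρ : ℕ} (q : ℕ) (hk : 1 ≤ k)
    (A : Matrix (Fin (k + m₂)) (Fin (k + n₂)) ℂ)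
    (U : Matrix (Fin (k + m₂)) (Fin (k + m₂)) ℂ)
    (V : Matrix (Fin (k + n₂)) (Fin (k + n₂)) ℂ)
    (σ : ℕ → ℝ)
    (hU : Uᴴ * U = 1) (hU' : U * Uᴴ = 1)
    (hV : Vᴴ * V = 1) (hV' : V * Vᴴ = 1)
    (hσ0 : ∀ i, 0 ≤ σ i) (hσm : ∀ i j, i ≤ j → σ j ≤ σ i)
    (hA : A = U * diagRect σ 0 (k + m₂) (k + n₂) * Vᴴ)
    (hrank : 0 < σ (k - 1)) (hgap : σ k < σ (k - 1))
    (Ω : Matrix (Fin (k + n₂)) (Fin (k + ρ)) ℂ)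
    (hΩ : ((colsL V)ᴴ * Ω).rank = k)
    (Q : Matrix (Fin (k + m₂)) (Fin (k + ρ)) ℂ)
    (R : Matrix (Fin (k + ρ)) (Fin (k + ρ)) ℂ)
    (hQ : Qᴴ * Q = 1) (hR : R.BlockTriangular id)
    (hQR : (A * Aᴴ) ^ q * A * Ω = Q * R)
    (UB : Matrix (Fin (k + ρ)) (Fin (k + ρ)) ℂ)
    (Vh : Matrix (Fin (k + n₂)) (Fin (k + ρ)) ℂ)
    (σh : ℕ → ℝ)
    (hUB : UBᴴ * UB = 1) (hUB' : UB * UBᴴ = 1)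
    (hVh : Vhᴴ * Vh = 1)
    (hσh0 : ∀ i, 0 ≤ σh i) (hσhm : ∀ i j, i ≤ j → σh j ≤ σh i)
    (hB : Qᴴ * A = UB * diagRect σh 0 (k + ρ) (k + ρ) * Vhᴴ)
    :
    ∀ p : ℝ≥0∞, 1 ≤ p →
      schatten p (diagRect σ 0 (k + m₂) (k + n₂) -
          diagRect (fun i => if i < k + ρ then σh i else 0) 0 (k + m₂) (k + n₂)) ≤
        schatten p (diagRect σ k m₂ n₂) + (σ k / σ (k - 1)) ^ (2 * q) * schatten p (diagRect σ k m₂ n₂ * ((colsR V)ᴴ * Ω * rpinv ((colsL V)ᴴ * Ω))) := by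
  intro p hp
  have hle (j : ℕ) (hj : j < k + ρ) : σh j ≤ σ j :=
    singularValue_le_of_conjTranspose_mul hσ0 hσm hσh0 hσhm hU hV hQ hUB hVh (hA ▸ hB) j hj
  have hsub (j : ℕ) : 0 ≤ σ j - (if j < k + ρ then σh j else 0) ∧
      σ j - (if j < k + ρ then σh j else 0) ≤ σ j := by
    split_ifs with hj
    · exact ⟨sub_nonneg.mpr (hle j hj), sub_le_self _ (hσh0 j)⟩
    · simpa using hσ0 j
  rw [diagRect_sub]
  refine schatten_diagRect_le (pow_nonneg (div_nonneg (hσ0 _) (hσ0 _)) _) (fun j => (hsub j).1)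
    (fun j => ?_) (fun t => ?_) hp
  · rw [abs_of_nonneg (hsub _).1, abs_of_nonneg (hσ0 _)]
    exact (hsub _).2
  · have hlt (j : Fin k) : (j : ℕ) < k + ρ := by omega
    simpa only [hlt, if_true] using sum_max_singularValue_sub_le q hk hU hV hσ0 hσm hA hrank hΩ hQ
      hQR hUB hVh hσh0 hσhm hB t
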